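/- Let n ∈ ℕ and p₁,…,pₙ ∈ ℕ₀. The function ζ_{p₁,…,pₙ}(s) := Σ'_{k∈ℤⁿ} k₁^{p₁}⋯kₙ^{pₙ} / |k|^s has a meromorphic extension to the whole complex plane with at most one pole, at s = n + p₁ + ⋯ + pₙ. If all p_i are even, this pole is simple with residue Res_{s=n+p₁+⋯+pₙ} ζ_{p₁,…,pₙ}(s) = 2 Γ((p₁+1)/2) ⋯ Γ((pₙ+1)/2) / Γ((n+p₁+⋯+pₙ)/2); if some p_i is odd, the extension is entire (in fact ζ_{p₁,…,pₙ} vanishes identically). -/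

import Mathlib

open Filter Topology

noncomputable section

/-- Euclidean norm of an integer vector `k ∈ ℤⁿ`. -/
def znorm {n : ℕ} (k : Fin n → ℤ) : ℝ := Real.sqrt (∑ i, ((k i : ℝ)) ^ 2)

/-- Term of `ζ_{p₁,…,pₙ}(s) = Σ'_{k∈ℤⁿ} k₁^{p₁}⋯kₙ^{pₙ}/|k|^s`
(term at `k = 0` omitted). -/
def zetaMonTerm {n : ℕ} (p : Fin n → ℕ) (s : ℂ) (k : Fin n → ℤ) : ℂ :=
  if k = 0 then 0 else (∏ i, ((k i : ℤ) : ℂ) ^ p i) / ((znorm k : ℂ) ^ s)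

/-!
By Poisson summation, for any Schwartz functions `ψᵢ` on the line the theta series
`t ↦ ∏ᵢ ∑ₘ ψᵢ (√t m)` satisfies a functional equation under `t ↦ 1 / t`, so its Mellin transform
continues meromorphically with at most two simple poles. For `ψᵢ x = x ^ pᵢ exp (-π x²)` this
transform is, up to a shift, `Γℝ(s) ζ_{p₁,…,pₙ}(s)`. Dividing by `Γℝ` removes the pole at `s = 0`,
and the residue at the other one is governed by the constant term `∏ᵢ ∫ ψᵢ` of the dual theta
series. If some `pᵢ` is odd, then so is `ψᵢ`, and the theta series vanishes identically.
-/

open Asymptotics MeasureTheory Set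
open scoped FourierTransform SchwartzMap

section Products

theorem isBigO_prod_sub_prod {ι α R : Type*} [NormedCommRing R] {l : Filter α}
    {f : ι → α → R} {c : ι → R} {g : α → ℝ} {s : Finset ι}
    (hbdd : ∀ i ∈ s, (fun x => f i x - c i) =O[l] fun _ => (1 : ℝ))
    (hfc : ∀ i ∈ s, (fun x => f i x - c i) =O[l] g) :
    (fun x => ∏ i ∈ s, f i x - ∏ i ∈ s, c i) =O[l] g := by
  classical
  induction s using Finset.induction_on with
  | empty => simpa using isBigO_zero g l
  | insert i s hi ih =>
    simp only [Finset.forall_mem_insert] at hbdd hfc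
    have hs := ih hbdd.2 hfc.2
    have hmul := hbdd.1.mul hs
    simp only [one_mul] at hmul
    refine ((hmul.add (hfc.1.const_mul_left (∏ j ∈ s, c j))).add
      (hs.const_mul_left (c i))).congr_left fun x => ?_
    rw [Finset.prod_insert hi, Finset.prod_insert hi]
    ring

variable {R κ : Type*} [NormedCommRing R]

theorem summable_norm_pi_prod {n : ℕ} {f : Fin n → κ → R} (hf : ∀ i, Summable (‖f i ·‖)) :
    Summable fun k : Fin n → κ => ‖∏ i, f i (k i)‖ := by
  induction n with
  | zero => exact .of_finite
  | succ n ih =>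
    rw [← (Fin.consEquiv fun _ => κ).summable_iff]
    refine ((hf 0).mul_norm (ih fun i => hf i.succ)).congr fun x => ?_
    simp [Fin.consEquiv, Fin.prod_univ_succ]

theorem hasSum_pi_prod [CompleteSpace R] {n : ℕ} {f : Fin n → κ → R}
    (hf : ∀ i, Summable (‖f i ·‖)) :
    HasSum (fun k : Fin n → κ => ∏ i, f i (k i)) (∏ i, ∑' m, f i m) := by
  induction n with
  | zero => simp
  | succ n ih =>
    set F : (Fin n → κ) → R := fun k => ∏ i, f i.succ (k i)
    have hF : HasSum F (∏ i, ∑' m, f (Fin.succ i) m) := ih fun i => hf i.succ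
    have hsummable : Summable fun x : κ × (Fin n → κ) => f 0 x.1 * F x.2 :=
      summable_mul_of_summable_norm (hf 0) (summable_norm_pi_prod fun i => hf i.succ)
    rw [← (Fin.consEquiv fun _ => κ).hasSum_iff, Fin.prod_univ_succ]
    refine ((hf 0).of_norm.hasSum.mul hF hsummable).congr_fun fun x => ?_
    simp [F, Fin.consEquiv, Fin.prod_univ_succ]

end Products

theorem tsum_eq_zero_of_odd {α E : Type*} [InvolutiveNeg α] [AddCommGroup E] [TopologicalSpace E]
    [IsTopologicalAddGroup E] [T2Space E] [IsAddTorsionFree E] {f : α → E} (hf : f.Odd) :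
    ∑' a, f a = 0 := by
  refine self_eq_neg.1 ?_
  rw [← tsum_neg, ← (Equiv.neg α).tsum_eq]
  exact tsum_congr hf

section Dilation

variable {F : Type*} [NormedAddCommGroup F] [NormedSpace ℝ F]

/-- The dilate `x ↦ ψ (a * x)` of a Schwartz function on the line. -/
def schwartzDilate (a : ℝ) (ha : a ≠ 0) : 𝓢(ℝ, F) →L[ℝ] 𝓢(ℝ, F) :=
  SchwartzMap.compCLMOfContinuousLinearEquiv ℝ
    (ContinuousLinearEquiv.unitsEquivAut ℝ (Units.mk0 a ha))

theorem schwartzDilate_apply {a : ℝ} (ha : a ≠ 0) (ψ : 𝓢(ℝ, F)) (x : ℝ) :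
    schwartzDilate a ha ψ x = ψ (a * x) := by
  simp [schwartzDilate, mul_comm]

end Dilation

section Fourier

variable {V E : Type*} [NormedAddCommGroup V] [InnerProductSpace ℝ V] [FiniteDimensional ℝ V]
  [MeasurableSpace V] [BorelSpace V] [NormedAddCommGroup E] [NormedSpace ℂ E]

theorem schwartz_fourier_apply_zero (ψ : 𝓢(V, E)) : (𝓕 ψ : 𝓢(V, E)) 0 = ∫ x, ψ x := by
  simp [SchwartzMap.fourier_coe, Real.fourier_eq]

theorem schwartz_fourier_odd {ψ : 𝓢(V, E)} (hψ : Function.Odd ψ) :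
    Function.Odd (𝓕 ψ : 𝓢(V, E)) := by
  intro y
  have hcomp : (fun x => ψ (-x)) = -ψ := funext hψ
  rw [SchwartzMap.fourier_coe, ← Real.fourierInv_eq_fourier_neg,
    Real.fourierInv_eq_fourier_comp_neg, hcomp]
  simp [Real.fourier_eq, integral_neg]

theorem fourier_schwartzDilate_apply {a : ℝ} (ha : a ≠ 0) (ψ : 𝓢(ℝ, E)) (y : ℝ) :
    (𝓕 (schwartzDilate a ha ψ) : 𝓢(ℝ, E)) y = |a⁻¹| • (𝓕 ψ : 𝓢(ℝ, E)) (a⁻¹ * y) := by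
  rw [SchwartzMap.fourier_coe, SchwartzMap.fourier_coe, Real.fourier_real_eq,
    Real.fourier_real_eq, ← Measure.integral_comp_mul_left]
  refine integral_congr_ae (.of_forall fun x => ?_)
  simp only [schwartzDilate_apply, show a * x * (a⁻¹ * y) = x * y by field_simp]

end Fourier

section Gaussian

theorem abs_pow_mul_exp_neg_sq_div_two_le (m : ℕ) (x : ℝ) :
    |x| ^ m * Real.exp (-(x ^ 2 / 2)) ≤ m.factorial * Real.exp (1 / 2) := by
  have hpow : |x| ^ m ≤ m.factorial * Real.exp |x| := by
    have := Real.pow_div_factorial_le_exp |x| (abs_nonneg x) m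
    rwa [div_le_iff₀' (by positivity)] at this
  have hexp : |x| - x ^ 2 / 2 ≤ 1 / 2 := by nlinarith [sq_nonneg (|x| - 1), sq_abs x]
  calc |x| ^ m * Real.exp (-(x ^ 2 / 2))
      ≤ m.factorial * Real.exp |x| * Real.exp (-(x ^ 2 / 2)) := by gcongr
    _ = m.factorial * Real.exp (|x| - x ^ 2 / 2) := by
      rw [mul_assoc, ← Real.exp_add, sub_eq_add_neg]
    _ ≤ m.factorial * Real.exp (1 / 2) := by gcongr

theorem exists_forall_abs_eval_mul_exp_neg_sq_div_two_le (Q : Polynomial ℝ) :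
    ∃ C, ∀ x : ℝ, |Q.eval x| * Real.exp (-(x ^ 2 / 2)) ≤ C := by
  induction Q using Polynomial.induction_on' with
  | add P Q hP hQ =>
    obtain ⟨C, hC⟩ := hP
    obtain ⟨D, hD⟩ := hQ
    refine ⟨C + D, fun x => ?_⟩
    calc |(P + Q).eval x| * Real.exp (-(x ^ 2 / 2))
        ≤ (|P.eval x| + |Q.eval x|) * Real.exp (-(x ^ 2 / 2)) := by
          rw [Polynomial.eval_add]
          gcongr
          exact abs_add_le _ _
      _ ≤ C + D := by
          rw [add_mul]
          exact add_le_add (hC x) (hD x)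
  | monomial m a =>
    refine ⟨|a| * (m.factorial * Real.exp (1 / 2)), fun x => ?_⟩
    rw [Polynomial.eval_monomial, abs_mul, abs_pow, mul_assoc]
    exact mul_le_mul_of_nonneg_left (abs_pow_mul_exp_neg_sq_div_two_le m x) (abs_nonneg a)

/-- The Gaussian `x ↦ exp (-x² / 2)` as a Schwartz function. -/
def schwartzGaussian : 𝓢(ℝ, ℝ) where
  toFun x := Real.exp (-(x ^ 2 / 2))
  smooth' := by fun_prop
  decay' k n := by
    set Q := (Polynomial.hermite n).map (Int.castRingHom ℝ) with hQ
    obtain ⟨C, hC⟩ := exists_forall_abs_eval_mul_exp_neg_sq_div_two_le (Polynomial.X ^ k * Q)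
    refine ⟨C, fun x => le_of_eq_of_le ?_ (hC x)⟩
    rw [norm_iteratedFDeriv_eq_norm_iteratedDeriv, iteratedDeriv_eq_iterate,
      Polynomial.deriv_gaussian_eq_hermite_mul_gaussian, hQ]
    simp [abs_mul, mul_assoc, Polynomial.aeval_def, Polynomial.eval_map]

/-- The Schwartz function `x ↦ x ^ p * exp (-π x²)`. -/
def monomialGaussian (p : ℕ) : 𝓢(ℝ, ℂ) :=
  SchwartzMap.smulLeftCLM ℂ (fun x : ℝ => (x : ℂ) ^ p)
    ((schwartzDilate √(2 * Real.pi) (by positivity) schwartzGaussian).postcompCLM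
      Complex.ofRealCLM)

theorem monomialGaussian_apply (p : ℕ) (x : ℝ) :
    monomialGaussian p x = (x : ℂ) ^ p * (Real.exp (-Real.pi * x ^ 2) : ℝ) := by
  have hexp : (√(2 * Real.pi) * x) ^ 2 / 2 = Real.pi * x ^ 2 := by
    rw [mul_pow, Real.sq_sqrt (by positivity)]
    ring
  rw [monomialGaussian, SchwartzMap.smulLeftCLM_apply_apply (by fun_prop),
    SchwartzMap.postcompCLM_apply, schwartzDilate_apply, smul_eq_mul, Complex.ofRealCLM_apply,
    neg_mul, ← hexp]
  rfl

theorem monomialGaussian_apply_zero (p : ℕ) : monomialGaussian p 0 = 0 ^ p := by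
  simp [monomialGaussian_apply]

theorem monomialGaussian_odd {p : ℕ} (hp : Odd p) : Function.Odd (monomialGaussian p) := by
  intro x
  simp only [monomialGaussian_apply, Complex.ofReal_neg, hp.neg_pow, even_two.neg_pow, neg_mul]

theorem fourier_monomialGaussian_zero {p : ℕ} (hp : Even p) :
    (𝓕 (monomialGaussian p) : 𝓢(ℝ, ℂ)) 0 =
      (Real.pi ^ (-((p + 1) / 2 : ℝ)) * Real.Gamma ((p + 1) / 2) : ℝ) := by
  have heven (x : ℝ) : monomialGaussian p x =
      (|x| ^ (p : ℝ) * Real.exp (-Real.pi * |x| ^ (2 : ℝ)) : ℝ) := by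
    simp [monomialGaussian_apply, hp.pow_abs]
  simp_rw [schwartz_fourier_apply_zero, heven]
  rw [integral_complex_ofReal,
    integral_comp_abs (f := fun y => y ^ (p : ℝ) * Real.exp (-Real.pi * y ^ (2 : ℝ))),
    integral_rpow_mul_exp_neg_mul_rpow two_pos (by linarith [p.cast_nonneg (α := ℝ)])
      Real.pi_pos]
  congr 1
  rw [neg_div]
  ring

end Gaussian

section IntSum

variable {E : Type*} [NormedAddCommGroup E] [NormedSpace ℝ E]

/-- The sum `∑ₘ ψ (a * m)` of a Schwartz function over the lattice `aℤ`. -/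
def schwartzIntSum (ψ : 𝓢(ℝ, E)) (a : ℝ) : E := ∑' m : ℤ, ψ (a * m)

theorem exists_norm_schwartz_mul_intCast_le (ψ : 𝓢(ℝ, E)) (N : ℕ) :
    ∃ C, 0 < C ∧ ∀ a, 0 < a → ∀ m : ℤ,
      ‖if m = 0 then 0 else ψ (a * m)‖ ≤ C * (a ^ N)⁻¹ * (1 / |(m : ℝ)| ^ N) := by
  obtain ⟨C, hC, hdecay⟩ := ψ.decay N 0
  refine ⟨C, hC, fun a ha m => ?_⟩
  split_ifs with hm
  · rw [norm_zero]
    positivity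
  · have : 0 < |(m : ℝ)| := by positivity
    have hbound := hdecay (a * m)
    rw [norm_iteratedFDeriv_zero, norm_mul, Real.norm_of_nonneg ha.le, Real.norm_eq_abs,
      mul_pow, ← le_div_iff₀' (by positivity)] at hbound
    exact hbound.trans_eq (by field_simp)

theorem summable_one_div_abs_int_pow {N : ℕ} (hN : 1 < N) :
    Summable fun m : ℤ => 1 / |(m : ℝ)| ^ N := by
  simpa using (Real.summable_one_div_int_pow.2 hN).norm

theorem summable_norm_schwartz_mul_intCast (ψ : 𝓢(ℝ, E)) {a : ℝ} (ha : 0 < a) :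
    Summable fun m : ℤ => ‖ψ (a * m)‖ := by
  obtain ⟨C, -, hC⟩ := exists_norm_schwartz_mul_intCast_le ψ 2
  refine ((summable_one_div_abs_int_pow one_lt_two).mul_left
    (C * (a ^ 2)⁻¹)).of_norm_bounded_eventually ?_
  filter_upwards [(finite_singleton (0 : ℤ)).compl_mem_cofinite] with m hm
  simpa [show m ≠ 0 from hm] using hC a ha m

theorem schwartzIntSum_eq_add_tsum [CompleteSpace E] (ψ : 𝓢(ℝ, E)) {a : ℝ} (ha : 0 < a) :
    schwartzIntSum ψ a = ψ 0 + ∑' m : ℤ, if m = 0 then 0 else ψ (a * m) := by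
  rw [schwartzIntSum, (summable_norm_schwartz_mul_intCast ψ ha).of_norm.tsum_eq_add_tsum_ite 0,
    Int.cast_zero, mul_zero]

theorem continuousOn_schwartzIntSum [CompleteSpace E] (ψ : 𝓢(ℝ, E)) :
    ContinuousOn (schwartzIntSum ψ) (Ioi 0) := by
  obtain ⟨C, hC₀, hC⟩ := exists_norm_schwartz_mul_intCast_le ψ 2
  have hcont (b : ℝ) (hb : 0 < b) :
      ContinuousOn (fun a => ∑' m : ℤ, if m = 0 then 0 else ψ (a * m)) (Ioi b) := by
    refine continuousOn_tsum (fun m => ?_)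
      ((summable_one_div_abs_int_pow one_lt_two).mul_left (C * (b ^ 2)⁻¹)) fun m a ha => ?_
    · split_ifs
      · exact continuousOn_const
      · exact (ψ.continuous.comp (continuous_mul_const _)).continuousOn
    · have hba : b ≤ a := le_of_lt ha
      refine (hC a (hb.trans ha) m).trans ?_
      gcongr
  refine ContinuousOn.congr (f := fun a => ψ 0 + ∑' m : ℤ, if m = 0 then 0 else ψ (a * m))
    (continuousOn_const.add fun a ha => ?_) fun a ha => schwartzIntSum_eq_add_tsum ψ ha
  exact ((hcont (a / 2) (half_pos ha)).continuousAt
    (Ioi_mem_nhds (half_lt_self ha))).continuousWithinAt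

theorem isBigO_schwartzIntSum_sub [CompleteSpace E] (ψ : 𝓢(ℝ, E)) (r : ℝ) :
    (fun a => schwartzIntSum ψ a - ψ 0) =O[atTop] (· ^ r) := by
  obtain ⟨N, hN⟩ := exists_nat_ge (max 2 (-r))
  have hN2 : 1 < N := by exact_mod_cast one_lt_two.trans_le ((le_max_left _ _).trans hN)
  have hNr : -(N : ℝ) ≤ r := neg_le.1 ((le_max_right _ _).trans hN)
  obtain ⟨C, hC₀, hC⟩ := exists_norm_schwartz_mul_intCast_le ψ N
  have hsum := summable_one_div_abs_int_pow hN2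
  refine .of_bound (C * ∑' m : ℤ, 1 / |(m : ℝ)| ^ N) ?_
  filter_upwards [eventually_ge_atTop 1] with a ha
  have ha₀ : 0 < a := one_pos.trans_le ha
  have hpow : (a ^ N)⁻¹ ≤ a ^ r := by
    rw [← Real.rpow_natCast, ← Real.rpow_neg ha₀.le]
    exact Real.rpow_le_rpow_of_exponent_le ha hNr
  have : 0 ≤ ∑' m : ℤ, 1 / |(m : ℝ)| ^ N := tsum_nonneg fun m => by positivity
  rw [schwartzIntSum_eq_add_tsum ψ ha₀, add_sub_cancel_left, Real.norm_of_nonneg (by positivity)]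
  calc ‖∑' m : ℤ, if m = 0 then 0 else ψ (a * m)‖
      ≤ C * (a ^ N)⁻¹ * ∑' m : ℤ, 1 / |(m : ℝ)| ^ N :=
        tsum_of_norm_bounded (hsum.hasSum.mul_left _) (hC a ha₀)
    _ = (C * ∑' m : ℤ, 1 / |(m : ℝ)| ^ N) * (a ^ N)⁻¹ := by ring
    _ ≤ (C * ∑' m : ℤ, 1 / |(m : ℝ)| ^ N) * a ^ r := by gcongr

theorem isBigO_schwartzIntSum_sqrt_sub [CompleteSpace E] (ψ : 𝓢(ℝ, E)) (r : ℝ) :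
    (fun t => schwartzIntSum ψ √t - ψ 0) =O[atTop] (· ^ r) := by
  refine ((isBigO_schwartzIntSum_sub ψ (2 * r)).comp_tendsto Real.tendsto_sqrt_atTop).congr' .rfl ?_
  filter_upwards [eventually_ge_atTop 0] with t ht
  rw [Function.comp_apply, Real.rpow_mul t.sqrt_nonneg, Real.rpow_two, Real.sq_sqrt ht]

theorem schwartzIntSum_eq_inv_mul_fourier (ψ : 𝓢(ℝ, ℂ)) {a : ℝ} (ha : 0 < a) :
    schwartzIntSum ψ a = (a⁻¹ : ℝ) * schwartzIntSum (𝓕 ψ) a⁻¹ := by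
  have hpoisson := SchwartzMap.tsum_eq_tsum_fourier (schwartzDilate a ha.ne' ψ) 0
  simpa [schwartzDilate_apply, fourier_schwartzDilate_apply, abs_of_pos ha, tsum_mul_left,
    schwartzIntSum] using hpoisson

theorem schwartzIntSum_eq_zero_of_odd {ψ : 𝓢(ℝ, E)} (hψ : Function.Odd ψ) (a : ℝ) :
    schwartzIntSum ψ a = 0 := by
  have : IsAddTorsionFree E := .of_isTorsionFree ℝ E
  exact tsum_eq_zero_of_odd fun m => by rw [Int.cast_neg, mul_neg, hψ]

end IntSum

section ThetaPair

variable {ι : Type*} [Fintype ι]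

/-- The theta series `∏ᵢ ∑ₘ ψᵢ (√t * m)` of a family of Schwartz functions. -/
def schwartzTheta (ψ : ι → 𝓢(ℝ, ℂ)) (t : ℝ) : ℂ := ∏ i, schwartzIntSum (ψ i) √t

theorem locallyIntegrableOn_schwartzTheta (ψ : ι → 𝓢(ℝ, ℂ)) :
    LocallyIntegrableOn (schwartzTheta ψ) (Ioi 0) := by
  refine ContinuousOn.locallyIntegrableOn ?_ measurableSet_Ioi
  exact continuousOn_finsetProd _ fun i _ => (continuousOn_schwartzIntSum (ψ i)).comp
    Real.continuous_sqrt.continuousOn fun t ht => Real.sqrt_pos.2 ht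

theorem isBigO_schwartzTheta_sub (ψ : ι → 𝓢(ℝ, ℂ)) (r : ℝ) :
    (fun t => schwartzTheta ψ t - ∏ i, ψ i 0) =O[atTop] (· ^ r) :=
  isBigO_prod_sub_prod
    (fun i _ => by simpa using isBigO_schwartzIntSum_sqrt_sub (ψ i) 0)
    (fun i _ => isBigO_schwartzIntSum_sqrt_sub (ψ i) r)

theorem schwartzTheta_one_div (ψ : ι → 𝓢(ℝ, ℂ)) {t : ℝ} (ht : 0 < t) :
    schwartzTheta ψ (1 / t) =
      (t ^ (Fintype.card ι / 2 : ℝ) : ℝ) * schwartzTheta (fun i => 𝓕 (ψ i)) t := by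
  have hpoisson (i : ι) := schwartzIntSum_eq_inv_mul_fourier (ψ i) (inv_pos.2 (Real.sqrt_pos.2 ht))
  simp only [schwartzTheta, one_div, Real.sqrt_inv, hpoisson, inv_inv, Finset.prod_mul_distrib,
    Finset.prod_const, Finset.card_univ, Real.rpow_div_two_eq_sqrt _ ht.le, Real.rpow_natCast,
    Complex.ofReal_pow]

theorem schwartzTheta_eq_zero_of_odd {ψ : ι → 𝓢(ℝ, ℂ)} {i : ι} (hi : Function.Odd (ψ i)) :
    schwartzTheta ψ = 0 :=
  funext fun t => Finset.prod_eq_zero (Finset.mem_univ i) (schwartzIntSum_eq_zero_of_odd hi √t)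

/-- Poisson summation makes the theta series of `ψ` and of `𝓕 ψ` a pair of functions related by
`t ↦ 1 / t`, whence a Mellin transform with meromorphic continuation. -/
def schwartzThetaPair [Nonempty ι] (ψ : ι → 𝓢(ℝ, ℂ)) : WeakFEPair ℂ where
  f := schwartzTheta ψ
  g := schwartzTheta fun i => 𝓕 (ψ i)
  k := Fintype.card ι / 2
  ε := 1
  f₀ := ∏ i, ψ i 0
  g₀ := ∏ i, (𝓕 (ψ i) : 𝓢(ℝ, ℂ)) 0
  hf_int := locallyIntegrableOn_schwartzTheta ψ
  hg_int := locallyIntegrableOn_schwartzTheta _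
  hk := by positivity
  hε := one_ne_zero
  h_feq t ht := by rw [one_mul, smul_eq_mul, schwartzTheta_one_div ψ ht]
  hf_top := isBigO_schwartzTheta_sub ψ
  hg_top := isBigO_schwartzTheta_sub _

variable [Nonempty ι] {ψ : ι → 𝓢(ℝ, ℂ)} {i : ι}

theorem schwartzThetaPair_f₀_eq_zero_of_odd (hi : Function.Odd (ψ i)) :
    (schwartzThetaPair ψ).f₀ = 0 :=
  Finset.prod_eq_zero (Finset.mem_univ i) hi.map_zero

theorem schwartzThetaPair_g₀_eq_zero_of_odd (hi : Function.Odd (ψ i)) :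
    (schwartzThetaPair ψ).g₀ = 0 :=
  Finset.prod_eq_zero (Finset.mem_univ i) (schwartz_fourier_odd hi).map_zero

theorem schwartzThetaPair_Λ₀_eq_zero_of_odd (hi : Function.Odd (ψ i)) :
    (schwartzThetaPair ψ).Λ₀ = 0 := by
  have hf : (schwartzThetaPair ψ).f = 0 := schwartzTheta_eq_zero_of_odd hi
  funext s
  simp [WeakFEPair.Λ₀, WeakFEPair.f_modif, mellin, hf, schwartzThetaPair_f₀_eq_zero_of_odd hi,
    schwartzThetaPair_g₀_eq_zero_of_odd hi]

end ThetaPair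

section Lattice

open Module

theorem summable_norm_sum_smul_rpow {ι E : Type*} [Fintype ι] [NormedAddCommGroup E]
    [NormedSpace ℝ E] (b : Basis ι ℝ E) {r : ℝ} (hr : r < -Fintype.card ι) :
    Summable fun k : ι → ℤ => ‖∑ i, k i • b i‖ ^ r := by
  have : FiniteDimensional ℝ E := .of_basis b
  have hrank : finrank ℤ (Submodule.span ℤ (range b)) = Fintype.card ι := by
    rw [ZLattice.rank ℝ, finrank_eq_card_basis b]
  have hsummable := ZLattice.summable_norm_rpow (Submodule.span ℤ (range b)) r (by rwa [hrank])
  refine ((b.restrictScalars ℤ).equivFun.symm.toEquiv.summable_iff.2 hsummable).congr fun k => ?_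
  simp [Basis.equivFun_symm_apply]

end Lattice

section Znorm

variable {n : ℕ}

theorem znorm_eq_norm (k : Fin n → ℤ) :
    znorm k = ‖(WithLp.toLp 2 fun i => (k i : ℝ) : EuclideanSpace ℝ (Fin n))‖ := by
  simp [znorm, EuclideanSpace.norm_eq]

theorem znorm_nonneg (k : Fin n → ℤ) : 0 ≤ znorm k := Real.sqrt_nonneg _

theorem znorm_sq (k : Fin n → ℤ) : znorm k ^ 2 = ∑ i, (k i : ℝ) ^ 2 :=
  Real.sq_sqrt (Finset.sum_nonneg fun _ _ => sq_nonneg _)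

theorem znorm_eq_zero {k : Fin n → ℤ} : znorm k = 0 ↔ k = 0 := by
  simp [znorm_eq_norm, funext_iff]

theorem abs_le_znorm (k : Fin n → ℤ) (i : Fin n) : |(k i : ℝ)| ≤ znorm k := by
  rw [znorm_eq_norm]
  exact PiLp.norm_apply_le (WithLp.toLp 2 fun i => (k i : ℝ) : EuclideanSpace ℝ (Fin n)) i

theorem summable_znorm_rpow {r : ℝ} (hr : r < -n) :
    Summable fun k : Fin n → ℤ => znorm k ^ r := by
  refine (summable_norm_sum_smul_rpow (EuclideanSpace.basisFun (Fin n) ℝ).toBasis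
    (by simpa using hr)).congr fun k => ?_
  rw [znorm_eq_norm]
  congr 2
  ext i
  simp [Pi.single_apply]

theorem norm_prod_intCast_pow_le (p : Fin n → ℕ) (k : Fin n → ℤ) :
    ‖∏ i, (k i : ℂ) ^ p i‖ ≤ znorm k ^ ∑ i, p i := by
  rw [norm_prod, ← Finset.prod_pow_eq_pow_sum]
  refine Finset.prod_le_prod (fun i _ => norm_nonneg _) fun i _ => ?_
  rw [norm_pow, Complex.norm_intCast]
  gcongr
  exact abs_le_znorm k i

theorem summable_norm_prod_div_znorm_rpow (p : Fin n → ℕ) {σ : ℝ} (hσ : n + ∑ i, (p i : ℝ) < σ) :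
    Summable fun k : Fin n → ℤ => ‖∏ i, (k i : ℂ) ^ p i‖ / |znorm k| ^ σ := by
  have hσ₀ : 0 < σ := lt_of_le_of_lt (by positivity) hσ
  refine (summable_znorm_rpow (n := n) (r := ∑ i, (p i : ℝ) - σ) (by linarith)).of_nonneg_of_le
    (fun k => by positivity) fun k => ?_
  rw [abs_of_nonneg (znorm_nonneg k)]
  rcases (znorm_nonneg k).eq_or_lt with hk | hk
  · rw [← hk, Real.zero_rpow hσ₀.ne', div_zero]
    positivity
  · rw [Real.rpow_sub hk, ← Nat.cast_sum, Real.rpow_natCast]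
    gcongr
    exact norm_prod_intCast_pow_le p k

end Znorm

section ZetaMon

variable {n : ℕ} (p : Fin n → ℕ)

theorem prod_monomialGaussian_apply {t : ℝ} (ht : 0 < t) (k : Fin n → ℤ) :
    ∏ i, monomialGaussian (p i) (√t * k i) = (t : ℂ) ^ ((∑ i, (p i : ℂ)) / 2) *
      ((∏ i, (k i : ℂ) ^ p i) * (Real.exp (-Real.pi * znorm k ^ 2 * t) : ℝ)) := by
  have hsqrt : ∏ i, (√t : ℂ) ^ p i = (t : ℂ) ^ ((∑ i, (p i : ℂ)) / 2) := by
    rw [Finset.prod_pow_eq_pow_sum, ← Complex.ofReal_pow, ← Real.rpow_natCast,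
      ← Real.rpow_div_two_eq_sqrt _ ht.le, Complex.ofReal_cpow ht.le]
    push_cast
    rfl
  have hexp : ∏ i, Real.exp (-Real.pi * (√t * k i) ^ 2) =
      Real.exp (-Real.pi * znorm k ^ 2 * t) := by
    simp only [← Real.exp_sum, znorm_sq, mul_pow, Real.sq_sqrt ht.le, Finset.mul_sum,
      Finset.sum_mul]
    exact congrArg _ (Finset.sum_congr rfl fun i _ => by ring)
  rw [← hexp, Complex.ofReal_prod, ← hsqrt]
  simp only [monomialGaussian_apply, Complex.ofReal_mul, Complex.ofReal_intCast, mul_pow,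
    Finset.prod_mul_distrib, mul_assoc]

theorem zetaMonTerm_eq_div {s : ℂ} (hs : s ≠ 0) (k : Fin n → ℤ) :
    zetaMonTerm p s k = (∏ i, (k i : ℂ) ^ p i) / (|znorm k| : ℝ) ^ s := by
  rw [abs_of_nonneg (znorm_nonneg k), zetaMonTerm]
  split_ifs with hk
  · rw [znorm_eq_zero.2 hk, Complex.ofReal_zero, Complex.zero_cpow hs, div_zero]
  · rfl

variable [NeZero n]

/-- The theta pair whose Mellin transform at `(s - ∑ pᵢ) / 2` is `Γℝ(s) ζ_{p₁,…,pₙ}(s)`. -/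
def monomialThetaPair : WeakFEPair ℂ := schwartzThetaPair fun i => monomialGaussian (p i)

theorem monomialThetaPair_k : (monomialThetaPair p).k = n / 2 :=
  congrArg (fun m : ℕ => (m / 2 : ℝ)) (Fintype.card_fin n)

theorem monomialThetaPair_f₀ : (monomialThetaPair p).f₀ = 0 ^ ∑ i, p i := by
  simp [monomialThetaPair, schwartzThetaPair, monomialGaussian_apply_zero,
    Finset.prod_pow_eq_pow_sum]

theorem monomialThetaPair_g₀ (hp : ∀ i, Even (p i)) :
    (monomialThetaPair p).g₀ = (Real.pi ^ (-((n + ∑ i, (p i : ℝ)) / 2)) *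
      ∏ i, Real.Gamma ((p i + 1) / 2) : ℝ) := by
  have hexponent : -((n + ∑ i, (p i : ℝ)) / 2) = ∑ i, -((p i + 1) / 2 : ℝ) := by
    rw [Finset.sum_neg_distrib, ← Finset.sum_div, Finset.sum_add_distrib, Finset.sum_const,
      Finset.card_univ, Fintype.card_fin, nsmul_one, add_comm]
  rw [hexponent, Real.rpow_sum_of_pos Real.pi_pos, ← Finset.prod_mul_distrib, Complex.ofReal_prod]
  calc (monomialThetaPair p).g₀ = ∏ i, (𝓕 (monomialGaussian (p i)) : 𝓢(ℝ, ℂ)) 0 := rfl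
    _ = _ := Finset.prod_congr rfl fun i _ => fourier_monomialGaussian_zero (hp i)

theorem hasSum_monomialThetaPair_sub {t : ℝ} (ht : 0 < t) :
    HasSum (fun k : Fin n → ℤ => if znorm k = 0 then 0 else
        (∏ i, (k i : ℂ) ^ p i) * (Real.exp (-Real.pi * znorm k ^ 2 * t) : ℝ))
      ((t : ℂ) ^ (-((∑ i, (p i : ℂ)) / 2)) •
        ((monomialThetaPair p).f t - (monomialThetaPair p).f₀)) := by
  have htheta : HasSum (fun k : Fin n → ℤ => ∏ i, monomialGaussian (p i) (√t * k i))
      ((monomialThetaPair p).f t) :=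
    hasSum_pi_prod (f := fun i (m : ℤ) => monomialGaussian (p i) (√t * m)) fun i =>
      summable_norm_schwartz_mul_intCast _ (Real.sqrt_pos.2 ht)
  refine ((htheta.sub (hasSum_pi_single 0 (monomialThetaPair p).f₀)).const_smul _).congr_fun
    fun k => ?_
  rcases eq_or_ne k 0 with rfl | hk
  · simp [znorm_eq_zero, monomialThetaPair, schwartzThetaPair]
  · rw [if_neg (znorm_eq_zero.not.2 hk), Pi.single_eq_of_ne hk, sub_zero,
      prod_monomialGaussian_apply p ht, smul_eq_mul, ← mul_assoc, ← Complex.cpow_add,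
      neg_add_cancel, Complex.cpow_zero, one_mul]
    exact_mod_cast ht.ne'

theorem hasSum_zetaMonTerm {s : ℂ} (hs : n + ∑ i, (p i : ℝ) < s.re) :
    HasSum (zetaMonTerm p s)
      ((Complex.Gammaℝ s)⁻¹ * (monomialThetaPair p).Λ ((s - ∑ i, (p i : ℂ)) / 2)) := by
  have hs₀ : 0 < s.re := lt_of_le_of_lt (by positivity) hs
  have hk : (monomialThetaPair p).k < ((s - ∑ i, (p i : ℂ)) / 2).re := by
    rw [monomialThetaPair_k, Complex.div_ofNat_re, Complex.sub_re, Complex.re_sum]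
    simp only [Complex.natCast_re]
    linarith
  have hsum := hasSum_mellin_pi_mul_sq hs₀ (fun t ht => hasSum_monomialThetaPair_sub p ht)
    (summable_norm_prod_div_znorm_rpow p hs)
  rw [mellin_cpow_smul, ← sub_eq_add_neg, ← sub_div, ((monomialThetaPair p).hasMellin hk).2] at hsum
  refine (hsum.mul_left (Complex.Gammaℝ s)⁻¹).congr_fun fun k => ?_
  rw [zetaMonTerm_eq_div p (by rintro rfl; simp at hs₀), mul_div_assoc,
    inv_mul_cancel_left₀ (Complex.Gammaℝ_ne_zero_of_re_pos hs₀)]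

/-- The meromorphic continuation of `ζ_{p₁,…,pₙ}`. It is `Λ((s - ∑ pᵢ) / 2) / Γℝ(s)` with the polar
terms of `Λ` written out; the one at `s = 0`, which is only present when `p = 0`, cancels
against the zero of `1 / Γℝ`, and is expressed through `Γℝ(s + 2)`. -/
def zetaMon (s : ℂ) : ℂ :=
  (Complex.Gammaℝ s)⁻¹ * ((monomialThetaPair p).Λ₀ ((s - ∑ i, (p i : ℂ)) / 2) +
    2 * (monomialThetaPair p).g₀ / (s - (n + ∑ i, (p i : ℂ)))) -
  (monomialThetaPair p).f₀ / Real.pi * (Complex.Gammaℝ (s + 2))⁻¹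

theorem zetaMon_eq_inv_Gammaℝ_mul_Λ {s : ℂ} (hs : s ≠ 0) :
    zetaMon p s =
      (Complex.Gammaℝ s)⁻¹ * (monomialThetaPair p).Λ ((s - ∑ i, (p i : ℂ)) / 2) := by
  have hpole : ((monomialThetaPair p).k : ℂ) - (s - ∑ i, (p i : ℂ)) / 2 =
      -((s - (n + ∑ i, (p i : ℂ))) / 2) := by
    rw [monomialThetaPair_k, Complex.ofReal_div, Complex.ofReal_natCast, Complex.ofReal_ofNat]
    ring
  have hf₀ : (monomialThetaPair p).f₀ / Real.pi * (Complex.Gammaℝ (s + 2))⁻¹ =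
      (Complex.Gammaℝ s)⁻¹ * (2 / (s - ∑ i, (p i : ℂ)) * (monomialThetaPair p).f₀) := by
    rcases eq_or_ne (∑ i, p i) 0 with hp | hp
    · have hp' : ∑ i, (p i : ℂ) = 0 := by exact_mod_cast hp
      rw [Complex.Gammaℝ_add_two hs, hp', sub_zero]
      field_simp
    · simp [monomialThetaPair_f₀, hp]
  rw [zetaMon, WeakFEPair.Λ, hpole, hf₀, show (monomialThetaPair p).ε = 1 from rfl, smul_eq_mul,
    smul_eq_mul, div_neg, one_div_div, one_div_div]
  ring

theorem hasSum_zetaMon {s : ℂ} (hs : n + ∑ i, (p i : ℝ) < s.re) :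
    HasSum (zetaMonTerm p s) (zetaMon p s) := by
  have hs₀ : 0 < s.re := lt_of_le_of_lt (by positivity) hs
  rw [zetaMon_eq_inv_Gammaℝ_mul_Λ p (by rintro rfl; simp at hs₀)]
  exact hasSum_zetaMonTerm p hs

theorem exists_differentiable_zetaMon_eq :
    ∃ h : ℂ → ℂ, Differentiable ℂ h ∧ ∀ s, zetaMon p s =
      h s + 2 * (monomialThetaPair p).g₀ * (Complex.Gammaℝ s)⁻¹ / (s - (n + ∑ i, (p i : ℂ))) := by
  have hΛ₀ : Differentiable ℂ fun s => (monomialThetaPair p).Λ₀ ((s - ∑ i, (p i : ℂ)) / 2) :=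
    (monomialThetaPair p).differentiable_Λ₀.comp (by fun_prop)
  have hΓ := Complex.differentiable_Gammaℝ_inv
  have hΓ₂ : Differentiable ℂ fun s => (Complex.Gammaℝ (s + 2))⁻¹ := hΓ.comp (by fun_prop)
  refine ⟨_, (hΓ.mul hΛ₀).sub (hΓ₂.const_mul ((monomialThetaPair p).f₀ / Real.pi)), fun s => ?_⟩
  simp only [zetaMon, Pi.sub_apply, Pi.mul_apply]
  ring

theorem differentiableAt_zetaMon {s : ℂ} (hs : s ≠ n + ∑ i, (p i : ℂ)) :
    DifferentiableAt ℂ (zetaMon p) s := by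
  obtain ⟨h, hh, hzeta⟩ := exists_differentiable_zetaMon_eq p
  rw [funext hzeta]
  exact (hh s).add (((Complex.differentiable_Gammaℝ_inv s).const_mul _).div (by fun_prop)
    (sub_ne_zero.2 hs))

theorem tendsto_sub_mul_zetaMon :
    Tendsto (fun s => (s - (n + ∑ i, (p i : ℂ))) * zetaMon p s) (𝓝[≠] (n + ∑ i, (p i : ℂ)))
      (𝓝 (2 * (monomialThetaPair p).g₀ * (Complex.Gammaℝ (n + ∑ i, (p i : ℂ)))⁻¹)) := by
  obtain ⟨h, hh, hzeta⟩ := exists_differentiable_zetaMon_eq p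
  set K : ℂ := n + ∑ i, (p i : ℂ)
  have hcont : Continuous fun s =>
      (s - K) * h s + 2 * (monomialThetaPair p).g₀ * (Complex.Gammaℝ s)⁻¹ :=
    ((continuous_id.sub continuous_const).mul hh.continuous).add
      (continuous_const.mul Complex.differentiable_Gammaℝ_inv.continuous)
  have hlim := hcont.continuousAt.continuousWithinAt (s := {K}ᶜ) (x := K) |>.tendsto
  simp only [sub_self, zero_mul, zero_add] at hlim
  refine hlim.congr' ?_
  filter_upwards [self_mem_nhdsWithin] with s hs
  rw [hzeta, mul_add, mul_div_cancel₀ _ (sub_ne_zero.2 hs)]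

theorem two_mul_monomialThetaPair_g₀_mul_inv_Gammaℝ (hp : ∀ i, Even (p i)) :
    2 * (monomialThetaPair p).g₀ * (Complex.Gammaℝ (n + ∑ i, (p i : ℂ)))⁻¹ =
      2 * (∏ i, (Real.Gamma ((p i + 1) / 2) : ℂ)) /
        (Real.Gamma ((n + ∑ i, (p i : ℝ)) / 2) : ℂ) := by
  have hΓ : Complex.Gammaℝ (n + ∑ i, (p i : ℂ)) = (Real.pi ^ (-((n + ∑ i, (p i : ℝ)) / 2)) *
      Real.Gamma ((n + ∑ i, (p i : ℝ)) / 2) : ℝ) := by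
    rw [Complex.Gammaℝ_def, Complex.ofReal_mul, Complex.ofReal_cpow Real.pi_pos.le,
      ← Complex.Gamma_ofReal, neg_div]
    push_cast
    rfl
  have hpi : ((Real.pi ^ (-((n + ∑ i, (p i : ℝ)) / 2)) : ℝ) : ℂ) ≠ 0 := by
    exact_mod_cast (Real.rpow_pos_of_pos Real.pi_pos _).ne'
  rw [monomialThetaPair_g₀ p hp, hΓ, Complex.ofReal_mul, Complex.ofReal_mul, Complex.ofReal_prod,
    ← div_eq_mul_inv, mul_left_comm, mul_div_mul_left _ _ hpi]

variable {p} in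
theorem zetaMon_eq_zero_of_odd {i : Fin n} (hi : Odd (p i)) (s : ℂ) : zetaMon p s = 0 := by
  have hodd := monomialGaussian_odd hi
  have hf₀ : (monomialThetaPair p).f₀ = 0 := schwartzThetaPair_f₀_eq_zero_of_odd hodd
  have hg₀ : (monomialThetaPair p).g₀ = 0 := schwartzThetaPair_g₀_eq_zero_of_odd hodd
  have hΛ₀ : (monomialThetaPair p).Λ₀ = 0 := schwartzThetaPair_Λ₀_eq_zero_of_odd hodd
  rw [zetaMon, hf₀, hg₀, hΛ₀, Pi.zero_apply, mul_zero, zero_div, add_zero, mul_zero, zero_div,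
    zero_mul, sub_zero]

end ZetaMon

/-- **Proposition.** `ζ_{p₁,…,pₙ}` extends meromorphically to `ℂ` with at most one
pole, at `s = n + p₁ + ⋯ + pₙ`.  If all `pᵢ` are even the pole is simple with
residue `2 Γ((p₁+1)/2)⋯Γ((pₙ+1)/2)/Γ((n+p₁+⋯+pₙ)/2)`; if some `pᵢ` is odd the
extension is entire (indeed `ζ_{p₁,…,pₙ}` vanishes identically). -/
theorem zetaMon_meromorphic (n : ℕ) (hn : 0 < n) (p : Fin n → ℕ) :
    ∃ g : ℂ → ℂ,
      DifferentiableOn ℂ g {s : ℂ | s ≠ (n : ℂ) + ∑ i, (p i : ℂ)} ∧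
      (∀ s : ℂ, (n : ℝ) + ∑ i, (p i : ℝ) < s.re → HasSum (zetaMonTerm p s) (g s)) ∧
      ((∀ i, Even (p i)) →
        Tendsto (fun s => (s - ((n : ℂ) + ∑ i, (p i : ℂ))) * g s)
          (𝓝[≠] ((n : ℂ) + ∑ i, (p i : ℂ)))
          (𝓝 (2 * (∏ i, ((Real.Gamma (((p i : ℝ) + 1) / 2) : ℝ) : ℂ)) /
            ((Real.Gamma (((n : ℝ) + ∑ i, (p i : ℝ)) / 2) : ℝ) : ℂ)))) ∧
      ((∃ i, Odd (p i)) → ∀ s : ℂ, s ≠ (n : ℂ) + ∑ i, (p i : ℂ) → g s = 0) := by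
  have : NeZero n := ⟨hn.ne'⟩
  refine ⟨zetaMon p, fun s hs => (differentiableAt_zetaMon p hs).differentiableWithinAt,
    fun s hs => hasSum_zetaMon p hs, fun hp => ?_, fun ⟨_, hi⟩ s _ => zetaMon_eq_zero_of_odd hi s⟩
  rw [← two_mul_monomialThetaPair_g₀_mul_inv_Gammaℝ p hp]
  exact tendsto_sub_mul_zetaMon p

end
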